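/- Let P be a finite poset with n = #P. For any m ≥ n − 1, the distribution μ_{m,↪} on J(P) equals the linear distribution μ_lin; that is, for every order ideal I ∈ J(P), μ_{m,↪}(I) = μ_lin(I). -/

import Mathlib

/-!
An injective order-preserving map `ℓ : P → {0,…,m}` is the same thing as a pair `(e, S)`: its image
`S`, an `n`-subset of `{0,…,m}`, and the linear extension `e` recording the relative order of its
values. The ideal `ℓ⁻¹({0,…,k-1})` is the ideal cut out by `e` at level `j = #(S ∩ {0,…,k-1})`
(`sum_injMaps`). So it suffices that `j` is uniform on `{0,…,n}` when `S` and `k ∈ {0,…,m+1}` are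
uniform and independent.

For this, open a gap in `S` at position `k` and put `k` in it: `(S, k)` corresponds to a pair
`(T, k)` with `T` an `(n+1)`-subset of `{0,…,m+1}` and `k ∈ T`, and the number of elements below
`k` is the same in `S` and `T`. For fixed `T`, this number takes each value in `{0,…,n}` exactly
once as `k` runs over `T` (`sum_sum_belowCount`).
-/

open Finset
open scoped Classical

noncomputable section

variable {α : Type*} [Fintype α] [PartialOrder α]

/-- `I` is an order ideal (down-set) of the finite poset `α`. -/
def IsIdeal (I : Finset α) : Prop := ∀ p ∈ I, ∀ q : α, q ≤ p → q ∈ I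

/-- The set `J(P)` of all order ideals of the finite poset `α`. -/
def idealsFinset (α : Type*) [Fintype α] [PartialOrder α] : Finset (Finset α) :=
  Finset.univ.filter fun I => IsIdeal I

/-- `p` can be toggled in to the order ideal `I`. -/
def CanToggleIn (I : Finset α) (p : α) : Prop := p ∉ I ∧ IsIdeal (insert p I)

/-- `p` can be toggled out of the order ideal `I`. -/
def CanToggleOut (I : Finset α) (p : α) : Prop := p ∈ I ∧ IsIdeal (I.erase p)

/-- The jaggedness of `I`: the number of elements that can be toggled in,
plus the number of elements that can be toggled out. -/
def jag (I : Finset α) : ℕ :=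
  (Finset.univ.filter fun p => CanToggleIn I p).card +
  (Finset.univ.filter fun p => CanToggleOut I p).card

/-- The probability, under `μ`, that a random order ideal satisfies `E`. -/
def prIdeal (μ : Finset α → ℝ) (E : Finset α → Prop) : ℝ :=
  ∑ I ∈ (idealsFinset α).filter E, μ I

/-- `μ` is toggle-symmetric: for every `p`, the probability that `p` can be toggled in
equals the probability that `p` can be toggled out. -/
def ToggleSymmetric (μ : Finset α → ℝ) : Prop :=
  ∀ p : α, prIdeal μ (fun I => CanToggleIn I p) = prIdeal μ (fun I => CanToggleOut I p)

/-- `μ` is a probability distribution on `J(P)`. -/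
def IsProbDist (μ : Finset α → ℝ) : Prop :=
  (∀ I, 0 ≤ μ I) ∧ (∀ I, ¬ IsIdeal I → μ I = 0) ∧ (∑ I ∈ idealsFinset α, μ I = 1)

/-- The expectation of the statistic `f` with respect to `μ`. -/
def expectStat (μ : Finset α → ℝ) (f : Finset α → ℝ) : ℝ :=
  ∑ I ∈ idealsFinset α, μ I * f I

/-- The linear extensions of `α`: order-preserving bijections `α ≃ {1,…,n}`. -/
def linExts (α : Type*) [Fintype α] [PartialOrder α] :
    Finset (α ≃ Fin (Fintype.card α)) :=
  Finset.univ.filter fun e => ∀ p q : α, p ≤ q → e p ≤ e q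

/-- The linear distribution `μ_lin` on `J(P)`: the distribution of `ℓ⁻¹({1,…,k})` for a
uniformly random linear extension `ℓ` and uniform `k ∈ {0,1,…,n}`. -/
def muLin (α : Type*) [Fintype α] [PartialOrder α] (I : Finset α) : ℝ :=
  (∑ e ∈ linExts α, ∑ k ∈ Finset.range (Fintype.card α + 1),
      if Finset.univ.filter (fun p => (e p : ℕ) < k) = I then (1 : ℝ) else 0) /
    ((linExts α).card * (Fintype.card α + 1))

/-- Injective order-preserving maps `α → {0,1,…,m}`. -/
def injMaps (α : Type*) [Fintype α] [PartialOrder α] (m : ℕ) : Finset (α → Fin (m + 1)) :=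
  Finset.univ.filter fun ℓ => Function.Injective ℓ ∧ ∀ p q : α, p ≤ q → ℓ p ≤ ℓ q

/-- The distribution `μ_{m,↪}` on `J(P)`: the distribution of `ℓ⁻¹({0,…,k−1})` for a
uniformly random injective order-preserving map `ℓ : α → {0,1,…,m}` and uniform
`k ∈ {0,1,…,m+1}`. -/
def muInj (α : Type*) [Fintype α] [PartialOrder α] (m : ℕ) (I : Finset α) : ℝ :=
  (∑ ℓ ∈ injMaps α m, ∑ k ∈ Finset.range (m + 2),
      if Finset.univ.filter (fun p => (ℓ p : ℕ) < k) = I then (1 : ℝ) else 0) /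
    ((injMaps α m).card * (m + 2))

/-- The number of elements of `S` smaller than `k`; the cutoff `k` is a natural number, so that
it may exceed every element of `Fin N`. -/
def belowCount {N : ℕ} (S : Finset (Fin N)) (k : ℕ) : ℕ :=
  (S.filter fun x : Fin N => (x : ℕ) < k).card

theorem orderEmbOfFin_lt_iff {N n : ℕ} (S : Finset (Fin N)) (h : S.card = n) (i : Fin n) (k : ℕ) :
    (S.orderEmbOfFin h i : ℕ) < k ↔ (i : ℕ) < belowCount S k := by
  constructor
  · intro hi
    have hsub : (Finset.Iic i).map (S.orderEmbOfFin h).toEmbedding ⊆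
        S.filter fun x : Fin N => (x : ℕ) < k := by
      intro x hx
      obtain ⟨j, hj, rfl⟩ := Finset.mem_map.1 hx
      have : S.orderEmbOfFin h j ≤ S.orderEmbOfFin h i :=
        (S.orderEmbOfFin h).monotone (Finset.mem_Iic.1 hj)
      exact Finset.mem_filter.2 ⟨S.orderEmbOfFin_mem h j, lt_of_le_of_lt this hi⟩
    have := Finset.card_le_card hsub
    rw [Finset.card_map, Fin.card_Iic] at this
    exact this
  · intro hi
    by_contra! hk
    have hsub : (S.filter fun x : Fin N => (x : ℕ) < k) ⊆
        (Finset.Iio i).map (S.orderEmbOfFin h).toEmbedding := by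
      intro x hx
      obtain ⟨hxS, hxk⟩ := Finset.mem_filter.1 hx
      have hxr : x ∈ Set.range (S.orderEmbOfFin h) := by
        rw [Finset.range_orderEmbOfFin]; exact hxS
      obtain ⟨j, rfl⟩ := hxr
      refine Finset.mem_map.2 ⟨j, Finset.mem_Iio.2 ?_, rfl⟩
      rw [← (S.orderEmbOfFin h).lt_iff_lt]
      exact Fin.lt_def.2 (lt_of_lt_of_le hxk hk)
    have := Finset.card_le_card hsub
    rw [Finset.card_map, Fin.card_Iio] at this
    exact absurd hi (not_lt.2 this)

theorem sum_belowCount {N : ℕ} (T : Finset (Fin N)) (g : ℕ → ℝ) :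
    ∑ k ∈ T, g (belowCount T k) = ∑ j ∈ Finset.range T.card, g j := by
  have hlt : ∀ a ∈ T, ∀ b ∈ T, a < b → belowCount T a < belowCount T b := by
    intro a ha b hb hab
    refine Finset.card_lt_card (Finset.ssubset_iff_of_subset ?_ |>.2 ⟨a, ?_, ?_⟩)
    · intro x hx
      have := Finset.mem_filter.1 hx
      exact Finset.mem_filter.2 ⟨this.1, this.2.trans hab⟩
    · exact Finset.mem_filter.2 ⟨ha, hab⟩
    · simp
  have hmaps : Set.MapsTo (fun k : Fin N => belowCount T k) T (Finset.range T.card) := by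
    intro k hk
    suffices belowCount T k < T.card from Finset.mem_coe.2 (Finset.mem_range.2 this)
    refine Finset.card_lt_card ?_
    exact Finset.filter_ssubset.2 ⟨k, hk, lt_irrefl _⟩
  have hinj : Set.InjOn (fun k : Fin N => belowCount T k) T := by
    intro a ha b hb hab
    rcases lt_trichotomy a b with h | h | h
    · exact absurd hab (hlt a ha b hb h).ne
    · exact h
    · exact absurd hab (hlt b hb a ha h).ne'
  exact Finset.sum_nbij _ hmaps hinj
    (Finset.surjOn_of_injOn_of_card_le _ hmaps hinj (by simp)) (fun _ _ => rfl)

/-- Inserting a new element at position `k` into `S` does not change the count below `k`. -/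
theorem belowCount_insert_succAbove {m : ℕ} (S : Finset (Fin (m + 1))) (k : Fin (m + 2)) :
    belowCount (insert k (S.map k.succAboveEmb)) k = belowCount S k := by
  unfold belowCount
  rw [Finset.filter_insert, if_neg (lt_irrefl _), Finset.filter_map, Finset.card_map]
  congr 1
  refine Finset.filter_congr fun x _ => ?_
  have := Fin.succAbove_lt_iff_castSucc_lt k x
  exact this

/-- Over uniform `S` and `k`, the count of elements of `S` below `k` is uniform on `{0,…,n}`. -/
theorem sum_sum_belowCount (n m : ℕ) (g : ℕ → ℝ) :
    ∑ S ∈ Finset.powersetCard n (Finset.univ : Finset (Fin (m + 1))),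
      ∑ k ∈ Finset.range (m + 2), g (belowCount S k) =
    (Finset.powersetCard (n + 1) (Finset.univ : Finset (Fin (m + 2)))).card *
      ∑ j ∈ Finset.range (n + 1), g j := by
  have h1 : ∑ T ∈ Finset.powersetCard (n + 1) (Finset.univ : Finset (Fin (m + 2))),
      ∑ k ∈ T, g (belowCount T k) =
    (Finset.powersetCard (n + 1) (Finset.univ : Finset (Fin (m + 2)))).card *
      ∑ j ∈ Finset.range (n + 1), g j := by
    rw [← nsmul_eq_mul]
    refine Finset.sum_eq_card_nsmul fun T hT => ?_
    rw [sum_belowCount, (Finset.mem_powersetCard.1 hT).2]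
  rw [← h1]
  simp only [Finset.sum_range]
  rw [Finset.sum_sigma', Finset.sum_sigma']
  refine Finset.sum_bij'
    (fun x _ => ⟨insert x.2 (x.1.map x.2.succAboveEmb), x.2⟩)
    (fun x _ => ⟨Finset.univ.filter fun y => x.2.succAbove y ∈ x.1, x.2⟩) ?_ ?_ ?_ ?_ ?_
  · rintro ⟨S, k⟩ h
    simp only [Finset.mem_sigma, Finset.mem_powersetCard_univ] at h ⊢
    refine ⟨?_, Finset.mem_insert_self _ _⟩
    rw [Finset.card_insert_of_notMem, Finset.card_map, h.1]
    simp [Fin.succAbove_ne]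
  · rintro ⟨T, k⟩ h
    simp only [Finset.mem_sigma, Finset.mem_powersetCard_univ] at h ⊢
    refine ⟨?_, Finset.mem_univ _⟩
    have : (Finset.univ.filter fun y => k.succAbove y ∈ T).map k.succAboveEmb = T.erase k := by
      ext x
      simp only [Finset.mem_map, Finset.mem_filter, Finset.mem_univ, true_and,
        Fin.succAboveEmb_apply, Finset.mem_erase]
      constructor
      · rintro ⟨y, hy, rfl⟩
        exact ⟨Fin.succAbove_ne _ _, hy⟩
      · rintro ⟨hx, hxT⟩
        obtain ⟨y, rfl⟩ := Fin.exists_succAbove_eq hx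
        exact ⟨y, hxT, rfl⟩
    rw [← Finset.card_map k.succAboveEmb, this, Finset.card_erase_of_mem h.2, h.1]
    rfl
  · rintro ⟨S, k⟩ h
    simp [Fin.succAbove_ne]
  · rintro ⟨T, k⟩ h
    simp only [Finset.mem_sigma] at h
    simp only [Sigma.mk.injEq, heq_eq_eq, and_true]
    ext x
    by_cases hx : x = k
    · subst hx
      simpa using h.2
    · obtain ⟨y, rfl⟩ := Fin.exists_succAbove_eq hx
      simp [Fin.succAbove_ne]
  · rintro ⟨S, k⟩ h
    rw [belowCount_insert_succAbove]

/-- The decomposition of an injective order-preserving map into a linear extension and an image,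
as a change of variables in sums over the pairs `(ℓ, k)`. -/
theorem sum_injMaps (α : Type*) [Fintype α] [PartialOrder α] (m : ℕ) (G : Finset α → ℝ) :
    ∑ ℓ ∈ injMaps α m, ∑ k ∈ Finset.range (m + 2),
      G (Finset.univ.filter fun p => (ℓ p : ℕ) < k) =
    ∑ e ∈ linExts α,
      ∑ S ∈ Finset.powersetCard (Fintype.card α) (Finset.univ : Finset (Fin (m + 1))),
      ∑ k ∈ Finset.range (m + 2),
        G (Finset.univ.filter fun p => (e p : ℕ) < belowCount S k) := by
  rw [← Finset.sum_product'
    (f := fun (e : α ≃ Fin (Fintype.card α)) (S : Finset (Fin (m + 1))) =>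
      ∑ k ∈ Finset.range (m + 2), G (Finset.univ.filter fun p => (e p : ℕ) < belowCount S k))]
  symm
  have hc : ∀ x : (α ≃ Fin (Fintype.card α)) × Finset (Fin (m + 1)),
      x ∈ linExts α ×ˢ Finset.powersetCard (Fintype.card α) Finset.univ →
      x.2.card = Fintype.card α := fun x hx =>
    Finset.mem_powersetCard_univ.1 (Finset.mem_product.1 hx).2
  refine Finset.sum_bij (fun x hx p => x.2.orderEmbOfFin (hc x hx) (x.1 p)) ?_ ?_ ?_ ?_
  · intro x hx
    have he := (Finset.mem_filter.1 (Finset.mem_product.1 hx).1).2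
    refine Finset.mem_filter.2 ⟨Finset.mem_univ _, ?_, fun p q hpq => ?_⟩
    · exact (x.2.orderEmbOfFin (hc x hx)).injective.comp x.1.injective
    · exact (x.2.orderEmbOfFin (hc x hx)).monotone (he p q hpq)
  · rintro ⟨e, S⟩ hx ⟨e₂, S₂⟩ hxx heq
    -- Both sets are recovered as the range of the common map.
    have hS : S = S₂ := by
      have h1 := congrArg Set.range heq
      have h2 : ∀ (e : α ≃ Fin (Fintype.card α)) (S : Finset (Fin (m + 1)))
          (h : S.card = Fintype.card α),
          Set.range (fun p => S.orderEmbOfFin h (e p)) = S := by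
        intro e S h
        rw [← Finset.range_orderEmbOfFin S h]
        exact e.surjective.range_comp _
      rw [h2 e S (hc _ hx), h2 e₂ S₂ (hc _ hxx)] at h1
      exact Finset.coe_injective h1
    subst hS
    have he : e = e₂ := Equiv.ext fun p =>
      (S.orderEmbOfFin (hc _ hx)).injective (congrFun heq p)
    rw [he]
  · intro ℓ hℓ
    obtain ⟨hinj, hmono⟩ := (Finset.mem_filter.1 hℓ).2
    have hcard : (Finset.univ.image ℓ).card = Fintype.card α :=
      Finset.card_image_of_injective _ hinj
    set S := Finset.univ.image ℓ with hS
    have hmem : ∀ p, ℓ p ∈ S := fun p => Finset.mem_image_of_mem _ (Finset.mem_univ p)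
    let r : α → Fin (Fintype.card α) := fun p => (S.orderIsoOfFin hcard).symm ⟨ℓ p, hmem p⟩
    have hr : Function.Injective r := by
      intro p q hpq
      have := (S.orderIsoOfFin hcard).symm.injective hpq
      exact hinj (Subtype.ext_iff.1 this)
    have hbij : Function.Bijective r :=
      (Fintype.bijective_iff_injective_and_card r).2 ⟨hr, by simp⟩
    refine ⟨(Equiv.ofBijective r hbij, S), Finset.mem_product.2
      ⟨Finset.mem_filter.2 ⟨Finset.mem_univ _, fun p q hpq => ?_⟩,
        Finset.mem_powersetCard_univ.2 hcard⟩, ?_⟩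
    · exact (S.orderIsoOfFin hcard).symm.monotone (hmono p q hpq)
    · funext p
      change S.orderEmbOfFin hcard (r p) = ℓ p
      rw [← Finset.coe_orderIsoOfFin_apply]
      simp [r]
  · intro x hx
    simp only [orderEmbOfFin_lt_iff]

/-- for any finite poset with `n` elements and any `m ≥ n − 1`, the
distribution `μ_{m,↪}` equals the linear distribution `μ_lin` on `J(P)`. -/
theorem muInj_eq_muLin (α : Type*) [Fintype α] [PartialOrder α]
    (m : ℕ) (hm : Fintype.card α - 1 ≤ m) :
    ∀ I ∈ idealsFinset α, muInj α m I = muLin α I := by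
  intro I _
  set n := Fintype.card α with hn
  set B : ℝ := ((Finset.powersetCard (n + 1) (Finset.univ : Finset (Fin (m + 2)))).card : ℝ)
    with hB
  -- The hypothesis `n ≤ m + 1` enters only here: it makes an `(n+1)`-subset of `Fin (m+2)` exist.
  have hB0 : B ≠ 0 := by
    rw [hB, Finset.card_powersetCard, Finset.card_univ, Fintype.card_fin]
    exact_mod_cast (Nat.choose_pos (by omega)).ne'
  have key : ∀ G : Finset α → ℝ, ∑ ℓ ∈ injMaps α m, ∑ k ∈ Finset.range (m + 2),
      G (Finset.univ.filter fun p => (ℓ p : ℕ) < k) =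
      B * ∑ e ∈ linExts α, ∑ k ∈ Finset.range (n + 1),
        G (Finset.univ.filter fun p => (e p : ℕ) < k) := by
    intro G
    rw [sum_injMaps, Finset.mul_sum]
    refine Finset.sum_congr rfl fun e _ => ?_
    exact sum_sum_belowCount n m
      (fun j => G (Finset.univ.filter fun p => (e p : ℕ) < j))
  -- The normalising constants are compared by summing the constant function `1`.
  have hnorm : ((injMaps α m).card : ℝ) * (m + 2) = B * ((linExts α).card * (n + 1)) := by
    simpa [mul_add] using key fun _ => 1
  have hnum := key fun J => if J = I then 1 else 0
  unfold muInj muLin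
  rw [hnorm, hnum, mul_div_mul_left _ _ hB0]
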